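/- Let (f_μ)_{μ≥1} be a sequence of nonnegative measurable functions on [0,∞) such that lim_{μ→∞} ∫_t^∞ f_μ dt = 0 for every t ≥ 0 and ∫_t^∞ f_μ dt → 0 as t → ∞ for every μ. Then for any ε > 0 there exists a sequence t_1 < t_2 < ⋯ → ∞ with t_{k+1} ≥ t_k + 2/ε and ∫_{t_k}^∞ f_μ dt ≤ (k+1)^{-3} for all μ and k; consequently Σ_{k=1}^∞ (k+1) ∫_{t_k}^{t_{k+1}} f_μ dt < ∞ for every μ, and there exists a smooth monotone function g : ℝ → [1,∞) with g(t_k) = √k for k ≥ 1 and g' ≤ ε such that ∫_0^∞ g(t)² f_μ(t) dt < ∞ for all μ. -/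

import Mathlib

open MeasureTheory

/-!
The tails of the `f_μ` are antitone in `t`; they tend to `0` at infinity for each `μ` and, at
`t = 0`, along the sequence, so they tend to `0` at infinity uniformly in `μ`. Hence the `t_k` can
be chosen one after the other, as far apart as desired. The weight `g` climbs from `√k` to
`√(k+1)` on `[t_k, t_{k+1}]` by a rescaled smooth transition. There `g² ≤ k + 1`, and the slope is
at most `C / (t_{k+1} - t_k)`, where `C` bounds the slope of the transition; the gaps are therefore
taken larger than `2 / ε` in case this alone does not keep the slope below `ε`.
-/

open Filter Set
open scoped Topology

section Tails

theorem tendstoUniformly_zero_of_antitoneOn_of_cofinite {ι α : Type*} [LinearOrder α]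
    {F : ι → α → ℝ} {a : α} (hanti : ∀ i, AntitoneOn (F i) (Ici a))
    (hlim : ∀ i, Tendsto (F i) atTop (𝓝 0))
    (hcofinite : Tendsto (fun i => F i a) cofinite (𝓝 0)) :
    TendstoUniformly (fun x i => F i x) 0 atTop := by
  have : Nonempty α := ⟨a⟩
  refine Metric.tendstoUniformly_iff.2 fun δ hδ => ?_
  have hfinite : {i | ¬ F i a < δ}.Finite := hcofinite.eventually_lt_const hδ
  have hexceptional : ∀ᶠ x in atTop, ∀ i ∈ {i | ¬ F i a < δ}, F i x < δ :=
    (eventually_all_finite hfinite).2 fun i _ => (hlim i).eventually_lt_const hδ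
  filter_upwards [hexceptional, eventually_ge_atTop a] with x hx hax i
  have hnonneg : 0 ≤ F i x := le_of_tendsto (hlim i) <| by
    filter_upwards [eventually_ge_atTop x] with y hxy
    exact hanti i hax (hax.trans hxy) hxy
  rw [Pi.zero_apply, dist_zero_left, Real.norm_of_nonneg hnonneg]
  by_cases hi : F i a < δ
  · exact (hanti i self_mem_Ici hax hax).trans_lt hi
  · exact hx i hi

theorem antitoneOn_setIntegral_Ici {α : Type*} [Preorder α] [MeasurableSpace α] {ν : Measure α}
    {f : α → ℝ} {a : α} (hf : 0 ≤ᵐ[ν.restrict (Ici a)] f) (hint : IntegrableOn f (Ici a) ν) :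
    AntitoneOn (fun t => ∫ x in Ici t, f x ∂ν) (Ici a) := fun _ hs _ _ hst =>
  setIntegral_mono_set (hint.mono_set (Ici_subset_Ici.2 hs))
    (ae_restrict_of_ae_restrict_of_subset (Ici_subset_Ici.2 hs) hf)
    (Ici_subset_Ici.2 hst).eventuallyLE

end Tails

section Sequences

theorem exists_seq_add_le_of_eventually {p : ℕ → ℝ → Prop} (hp : ∀ k, ∀ᶠ x in atTop, p k x)
    {d : ℝ} (hd : 0 ≤ d) : ∃ t : ℕ → ℝ, (∀ k, t k + d ≤ t (k + 1)) ∧ ∀ k, p k (t k) := by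
  choose T hT using fun k => eventually_atTop.1 (hp k)
  refine ⟨fun k => k * d + ∑ i ∈ Finset.range (k + 1), |T i|, fun k => ?_, fun k => hT k _ ?_⟩
  · simp only [Finset.sum_range_succ _ (k + 1), Nat.cast_add_one]
    linarith [abs_nonneg (T (k + 1))]
  · calc T k ≤ |T k| := le_abs_self _
      _ ≤ ∑ i ∈ Finset.range (k + 1), |T i| :=
        Finset.single_le_sum (fun i _ => abs_nonneg (T i)) (Finset.self_mem_range_succ k)
      _ ≤ k * d + ∑ i ∈ Finset.range (k + 1), |T i| := le_add_of_nonneg_left (by positivity)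

theorem tendsto_atTop_of_add_le {t : ℕ → ℝ} {d : ℝ} (hd : 0 < d)
    (ht : ∀ k, t k + d ≤ t (k + 1)) : Tendsto t atTop atTop := by
  have hlinear : ∀ k : ℕ, t 0 + k * d ≤ t k := fun k => by
    induction k with
    | zero => simp
    | succ k ih =>
      push_cast
      linarith [ht k]
  exact tendsto_atTop_mono hlinear <| tendsto_atTop_add_const_left _ _ <|
    tendsto_natCast_atTop_atTop.atTop_mul_const hd

theorem exists_seq_forall_le_of_tendstoUniformly {ι : Type*} {F : ℝ → ι → ℝ}
    (hF : TendstoUniformly F 0 atTop) {b : ℕ → ℝ} (hb : ∀ k, 0 < b k) (a : ℝ) {d : ℝ}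
    (hd : 0 ≤ d) :
    ∃ t : ℕ → ℝ, (∀ k, t k + d ≤ t (k + 1)) ∧ ∀ k, a ≤ t k ∧ ∀ i, F (t k) i ≤ b k := by
  have hsmall (k : ℕ) : ∀ᶠ x in atTop, ∀ i, F x i ≤ b k := by
    filter_upwards [Metric.tendstoUniformly_iff.1 hF (b k) (hb k)] with x hx i
    have hnorm : ‖F x i‖ < b k := by simpa using hx i
    exact (le_abs_self _).trans hnorm.le
  exact exists_seq_add_le_of_eventually (fun k => (eventually_ge_atTop a).and (hsmall k)) hd

theorem summable_add_two_mul_inv_add_two_pow_three :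
    Summable fun k : ℕ => ((k : ℝ) + 2) * ((k : ℝ) + 2)⁻¹ ^ 3 := by
  have hsq : Summable fun k : ℕ => (((k + 2 : ℕ) : ℝ) ^ 2)⁻¹ :=
    (summable_nat_add_iff 2).2 (Real.summable_nat_pow_inv.2 one_lt_two)
  refine hsq.congr fun k => ?_
  push_cast
  field_simp

end Sequences

section WeightedIntegrals

theorem summable_mul_setIntegral_Ioc {α : Type*} [Preorder α] [MeasurableSpace α]
    {ν : Measure α} {f : α → ℝ} {t : ℕ → α} {b c : ℕ → ℝ} (ht : Monotone t)
    (hf : 0 ≤ᵐ[ν.restrict (Ici (t 0))] f) (hint : IntegrableOn f (Ici (t 0)) ν)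
    (hc : ∀ k, 0 ≤ c k) (hb : ∀ k, ∫ x in Ici (t k), f x ∂ν ≤ b k)
    (hsum : Summable fun k => c k * b k) :
    Summable fun k => c k * ∫ x in Ioc (t k) (t (k + 1)), f x ∂ν := by
  have hsub : ∀ k, Ici (t k) ⊆ Ici (t 0) := fun k => Ici_subset_Ici.2 (ht k.zero_le)
  have hIoc : ∀ k, Ioc (t k) (t (k + 1)) ⊆ Ici (t k) := fun k x hx => hx.1.le
  refine hsum.of_nonneg_of_le (fun k => mul_nonneg (hc k) ?_)
    fun k => mul_le_mul_of_nonneg_left (le_trans ?_ (hb k)) (hc k)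
  · exact integral_nonneg_of_ae
      (ae_restrict_of_ae_restrict_of_subset ((hIoc k).trans (hsub k)) hf)
  · exact setIntegral_mono_set (hint.mono_set (hsub k))
      (ae_restrict_of_ae_restrict_of_subset (hsub k) hf) (hIoc k).eventuallyLE

theorem integrableOn_iUnion_smul_of_summable {X ι E : Type*} [MeasurableSpace X] [Countable ι]
    [NormedAddCommGroup E] [NormedSpace ℝ E] {ν : Measure X} {s : ι → Set X} {w : X → ℝ}
    {h : X → E} {c : ι → ℝ} (hs : ∀ i, MeasurableSet (s i))
    (hint : ∀ i, IntegrableOn h (s i) ν) (hw : AEStronglyMeasurable w ν)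
    (hwc : ∀ i, ∀ x ∈ s i, ‖w x‖ ≤ c i)
    (hsum : Summable fun i => c i * ∫ x in s i, ‖h x‖ ∂ν) :
    IntegrableOn (fun x => w x • h x) (⋃ i, s i) ν := by
  have hwint : ∀ i, IntegrableOn (fun x => w x • h x) (s i) ν := fun i =>
    (hint i).bdd_smul (c i) hw.restrict (ae_restrict_of_forall_mem (hs i) (hwc i))
  refine integrableOn_iUnion_of_summable_integral_norm hwint
    (hsum.of_nonneg_of_le (fun i => integral_nonneg fun x => norm_nonneg _) fun i => ?_)
  rw [← integral_const_mul]
  refine setIntegral_mono_on (hwint i).norm ((hint i).norm.const_mul _) (hs i) fun x hx => ?_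
  rw [norm_smul]
  exact mul_le_mul_of_nonneg_right (hwc i x hx) (norm_nonneg _)

theorem integrableOn_Ici_mul_of_monotone {ν : Measure ℝ} {f w : ℝ → ℝ} {a : ℝ} {t : ℕ → ℝ}
    (ht : Monotone t) (htop : Tendsto t atTop atTop) (hat : a ≤ t 0)
    (hf : 0 ≤ᵐ[ν.restrict (Ici a)] f) (hint : IntegrableOn f (Ici a) ν)
    (hw : Monotone w) (hwa : 0 ≤ w a)
    (hsum : Summable fun k => w (t (k + 1)) * ∫ x in Ioc (t k) (t (k + 1)), f x ∂ν) :
    IntegrableOn (fun x => w x * f x) (Ici a) ν := by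
  have hw_norm : ∀ {x y}, a ≤ x → x ≤ y → ‖w x‖ ≤ w y := fun hax hxy => by
    rw [Real.norm_of_nonneg (hwa.trans (hw hax))]
    exact hw hxy
  have hw_meas : AEStronglyMeasurable w ν := hw.measurable.aestronglyMeasurable
  have hIoc : ∀ k, Ioc (t k) (t (k + 1)) ⊆ Ici a := fun k x hx =>
    (hat.trans (ht k.zero_le)).trans hx.1.le
  have hfirst : IntegrableOn (fun x => w x * f x) (Icc a (t 0)) ν :=
    (hint.mono_set Icc_subset_Ici_self).bdd_mul hw_meas.restrict
      (ae_restrict_of_forall_mem measurableSet_Icc fun x hx => hw_norm hx.1 hx.2)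
  have hrest : IntegrableOn (fun x => w x * f x) (⋃ k, Ioc (t k) (t (k + 1))) ν := by
    refine integrableOn_iUnion_smul_of_summable (fun k => measurableSet_Ioc)
      (fun k => hint.mono_set (hIoc k)) hw_meas
      (fun k x hx => hw_norm (hIoc k hx) hx.2) (hsum.congr fun k => ?_)
    congr 1
    refine integral_congr_ae ?_
    filter_upwards [ae_restrict_of_ae_restrict_of_subset (hIoc k) hf] with x hx
    exact (Real.norm_of_nonneg hx).symm
  have hunion : ⋃ k, Ioc (t k) (t (k + 1)) = Ioi (t 0) :=
    iUnion_Ioc_map_succ_eq_Ioi (fun k => ht k.zero_le) (not_bddAbove_of_tendsto_atTop htop)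
  rw [← Icc_union_Ioi_eq_Ici hat, ← hunion]
  exact hfirst.union hrest

end WeightedIntegrals

section SmoothStep

theorem deriv_smoothTransition_eq_zero {x : ℝ} (hx : x ∉ Ioo 0 1) :
    deriv Real.smoothTransition x = 0 := by
  rcases le_or_gt x 0 with h0 | h0
  · refine IsLocalMin.deriv_eq_zero (.of_forall fun y => ?_)
    rw [Real.smoothTransition.zero_of_nonpos h0]
    exact Real.smoothTransition.nonneg y
  · refine IsLocalMax.deriv_eq_zero (.of_forall fun y => ?_)
    rw [Real.smoothTransition.one_of_one_le (not_lt.1 fun h1 => hx ⟨h0, h1⟩)]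
    exact Real.smoothTransition.le_one y

theorem exists_norm_deriv_smoothTransition_le :
    ∃ C : ℝ, ∀ x, ‖deriv Real.smoothTransition x‖ ≤ C :=
  (Real.smoothTransition.contDiff (n := 1)).continuous_deriv_one.bounded_above_of_compact_support
    (.intro isCompact_Icc fun _ hx =>
      deriv_smoothTransition_eq_zero fun h => hx (Ioo_subset_Icc_self h))

/-- The smooth step from `0` to `1` across the interval `[a, b]`, for `a < b`; these are the pieces
of `smoothInterpolation`. -/
noncomputable def smoothStep (a b x : ℝ) : ℝ :=
  Real.smoothTransition ((x - a) / (b - a))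

variable {a b x : ℝ}

theorem smoothStep_of_le (hab : a ≤ b) (hx : x ≤ a) : smoothStep a b x = 0 :=
  Real.smoothTransition.zero_of_nonpos
    (div_nonpos_of_nonpos_of_nonneg (sub_nonpos.2 hx) (sub_nonneg.2 hab))

theorem smoothStep_of_ge (hab : a < b) (hx : b ≤ x) : smoothStep a b x = 1 :=
  Real.smoothTransition.one_of_one_le
    ((one_le_div (sub_pos.2 hab)).2 (sub_le_sub_right hx a))

theorem smoothStep_nonneg (a b x : ℝ) : 0 ≤ smoothStep a b x :=
  Real.smoothTransition.nonneg _

theorem monotone_smoothStep (hab : a ≤ b) : Monotone (smoothStep a b) := fun _ _ hxy =>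
  Real.smoothTransition.monotone
    (div_le_div_of_nonneg_right (sub_le_sub_right hxy a) (sub_nonneg.2 hab))

theorem contDiff_smoothStep (a b : ℝ) {n : ℕ∞} : ContDiff ℝ n (smoothStep a b) :=
  Real.smoothTransition.contDiff.comp ((contDiff_id.sub contDiff_const).div_const _)

theorem differentiable_smoothStep (a b : ℝ) : Differentiable ℝ (smoothStep a b) :=
  (contDiff_smoothStep a b (n := 1)).differentiable one_ne_zero

theorem deriv_smoothStep (a b x : ℝ) :
    deriv (smoothStep a b) x = deriv Real.smoothTransition ((x - a) / (b - a)) / (b - a) := by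
  have hφ := ((Real.smoothTransition.contDiff (n := 1)).differentiable one_ne_zero
    ((x - a) / (b - a))).hasDerivAt
  have haffine := ((hasDerivAt_id x).sub_const a).div_const (b - a)
  rw [← mul_one_div]
  exact (hφ.comp x haffine).deriv

theorem deriv_smoothStep_eq_zero (hab : a < b) (hx : x ∉ Ioo a b) :
    deriv (smoothStep a b) x = 0 := by
  have hba : 0 < b - a := sub_pos.2 hab
  rw [deriv_smoothStep, deriv_smoothTransition_eq_zero, zero_div]
  rintro ⟨h0, h1⟩
  exact hx ⟨sub_pos.1 ((div_pos_iff_of_pos_right hba).1 h0),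
    (sub_lt_sub_iff_right a).1 ((div_lt_one hba).1 h1)⟩

theorem deriv_smoothStep_le {C : ℝ} (hC : ∀ y, deriv Real.smoothTransition y ≤ C)
    (hab : a ≤ b) (x : ℝ) : deriv (smoothStep a b) x ≤ C / (b - a) := by
  rw [deriv_smoothStep]
  exact div_le_div_of_nonneg_right (hC _) (sub_nonneg.2 hab)

end SmoothStep

section SmoothInterpolation

/-- The smooth function with value `s k` at the node `t k`, constant to the left of `t 0`, that
passes from each node to the next by a smooth step; with `s k = √(k+1)` it is the weight `g`. For
`t` tending to `∞` the sum is locally finite. -/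
noncomputable def smoothInterpolation (t s : ℕ → ℝ) (x : ℝ) : ℝ :=
  s 0 + ∑' k, (s (k + 1) - s k) * smoothStep (t k) (t (k + 1)) x

variable {t s : ℕ → ℝ} {n : ℕ} {x : ℝ}

theorem smoothInterpolation_eq_sum (ht : Monotone t) (hx : x ≤ t n) :
    smoothInterpolation t s x =
      s 0 + ∑ k ∈ Finset.range n, (s (k + 1) - s k) * smoothStep (t k) (t (k + 1)) x := by
  refine congrArg (s 0 + ·) (tsum_eq_sum fun k hk => ?_)
  have hnk : n ≤ k := not_lt.1 fun h => hk (Finset.mem_range.2 h)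
  rw [smoothStep_of_le (ht k.le_succ) (hx.trans (ht hnk)), mul_zero]

theorem smoothInterpolation_eventuallyEq (ht : Monotone t) (hx : x < t n) :
    smoothInterpolation t s =ᶠ[𝓝 x] fun y =>
      s 0 + ∑ k ∈ Finset.range n, (s (k + 1) - s k) * smoothStep (t k) (t (k + 1)) y :=
  (gt_mem_nhds hx).mono fun _ hy => smoothInterpolation_eq_sum ht (le_of_lt hy)

theorem smoothInterpolation_apply_node (ht : StrictMono t) (n : ℕ) :
    smoothInterpolation t s (t n) = s n := by
  have hstep : ∀ k ∈ Finset.range n,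
      (s (k + 1) - s k) * smoothStep (t k) (t (k + 1)) (t n) = s (k + 1) - s k := fun k hk => by
    rw [smoothStep_of_ge (ht k.lt_succ_self) (ht.monotone (Finset.mem_range.1 hk)), mul_one]
  rw [smoothInterpolation_eq_sum ht.monotone le_rfl, Finset.sum_congr rfl hstep,
    Finset.sum_range_sub, add_sub_cancel]

theorem le_smoothInterpolation (hs : Monotone s) (x : ℝ) : s 0 ≤ smoothInterpolation t s x :=
  le_add_of_nonneg_right <| tsum_nonneg fun k =>
    mul_nonneg (sub_nonneg.2 (hs k.le_succ)) (smoothStep_nonneg _ _ _)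

theorem monotone_smoothInterpolation (ht : Monotone t) (htop : Tendsto t atTop atTop)
    (hs : Monotone s) : Monotone (smoothInterpolation t s) := fun x y hxy => by
  obtain ⟨n, hn⟩ := (htop.eventually_ge_atTop y).exists
  rw [smoothInterpolation_eq_sum ht (hxy.trans hn), smoothInterpolation_eq_sum ht hn]
  gcongr with k
  · exact sub_nonneg.2 (hs k.le_succ)
  · exact monotone_smoothStep (ht k.le_succ) hxy

theorem contDiff_smoothInterpolation (ht : Monotone t) (htop : Tendsto t atTop atTop)
    {m : ℕ∞} : ContDiff ℝ m (smoothInterpolation t s) := by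
  refine contDiff_iff_contDiffAt.2 fun x => ?_
  obtain ⟨n, hn⟩ := (htop.eventually_gt_atTop x).exists
  refine ContDiffAt.congr_of_eventuallyEq ?_ (smoothInterpolation_eventuallyEq ht hn)
  exact (contDiff_const.add <| ContDiff.sum fun k _ =>
    contDiff_const.mul (contDiff_smoothStep _ _)).contDiffAt

theorem deriv_smoothInterpolation (ht : Monotone t) (hx : x < t n) :
    deriv (smoothInterpolation t s) x =
      ∑ k ∈ Finset.range n, (s (k + 1) - s k) * deriv (smoothStep (t k) (t (k + 1))) x := by
  rw [(smoothInterpolation_eventuallyEq ht hx).deriv_eq]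
  exact (HasDerivAt.const_add _ <| HasDerivAt.fun_sum fun k _ =>
    (differentiable_smoothStep _ _ x).hasDerivAt.const_mul _).deriv

theorem deriv_smoothInterpolation_le {C ε : ℝ} (hC : ∀ y, deriv Real.smoothTransition y ≤ C)
    (ht : StrictMono t) (htop : Tendsto t atTop atTop) (hs : Monotone s) (hε : 0 ≤ ε)
    (hslope : ∀ k, (s (k + 1) - s k) * C ≤ ε * (t (k + 1) - t k)) (x : ℝ) :
    deriv (smoothInterpolation t s) x ≤ ε := by
  obtain ⟨n, hn⟩ := (htop.eventually_gt_atTop x).exists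
  rw [deriv_smoothInterpolation ht.monotone hn]
  have hterm_zero : ∀ k, x ∉ Ioo (t k) (t (k + 1)) →
      (s (k + 1) - s k) * deriv (smoothStep (t k) (t (k + 1))) x = 0 := fun k hk => by
    rw [deriv_smoothStep_eq_zero (ht k.lt_succ_self) hk, mul_zero]
  have hterm_le : ∀ k, (s (k + 1) - s k) * deriv (smoothStep (t k) (t (k + 1))) x ≤ ε :=
    fun k => calc
      _ ≤ (s (k + 1) - s k) * (C / (t (k + 1) - t k)) :=
        mul_le_mul_of_nonneg_left (deriv_smoothStep_le hC (ht.monotone k.le_succ) x)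
          (sub_nonneg.2 (hs k.le_succ))
      _ = (s (k + 1) - s k) * C / (t (k + 1) - t k) := (mul_div_assoc _ _ _).symm
      _ ≤ ε := (div_le_iff₀ (sub_pos.2 (ht k.lt_succ_self))).2 (hslope k)
  -- The intervals between consecutive nodes are disjoint, so at most one term is nonzero.
  by_cases hmem : ∃ k, x ∈ Ioo (t k) (t (k + 1))
  · obtain ⟨k, hk⟩ := hmem
    have hkn : k ∈ Finset.range n := Finset.mem_range.2 (ht.lt_iff_lt.1 (hk.1.trans hn))
    have hother : ∀ j, j ≠ k → x ∉ Ioo (t j) (t (j + 1)) := fun j hjk hj =>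
      disjoint_left.1 (ht.monotone.pairwise_disjoint_on_Ioo_succ hjk) hj hk
    rw [Finset.sum_eq_single_of_mem k hkn fun j _ hjk => hterm_zero j (hother j hjk)]
    exact hterm_le k
  · rw [Finset.sum_eq_zero fun k _ => hterm_zero k fun hk => hmem ⟨k, hk⟩]
    exact hε

theorem exists_forall_deriv_smoothInterpolation_le (hs : Monotone s) {B ε : ℝ}
    (hB : ∀ k, s (k + 1) - s k ≤ B) (hε : 0 < ε) :
    ∃ d : ℝ, ∀ t : ℕ → ℝ, StrictMono t → Tendsto t atTop atTop →
      (∀ k, t k + d ≤ t (k + 1)) → ∀ x, deriv (smoothInterpolation t s) x ≤ ε := by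
  obtain ⟨C, hC⟩ := exists_norm_deriv_smoothTransition_le
  have hC_nonneg : 0 ≤ C := (norm_nonneg _).trans (hC 0)
  refine ⟨B * C / ε, fun t ht htop hgap =>
    deriv_smoothInterpolation_le (fun y => (le_abs_self _).trans (hC y)) ht htop hs hε.le
      fun k => ?_⟩
  calc (s (k + 1) - s k) * C ≤ B * C := mul_le_mul_of_nonneg_right (hB k) hC_nonneg
    _ = ε * (B * C / ε) := (mul_div_cancel₀ _ hε.ne').symm
    _ ≤ ε * (t (k + 1) - t k) :=
      mul_le_mul_of_nonneg_left (le_sub_iff_add_le'.2 (hgap k)) hε.le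

theorem integrableOn_Ici_sq_smoothInterpolation_mul {ν : Measure ℝ} {f : ℝ → ℝ} {a : ℝ}
    (ht : StrictMono t) (htop : Tendsto t atTop atTop) (hat : a ≤ t 0)
    (hf : 0 ≤ᵐ[ν.restrict (Ici a)] f) (hint : IntegrableOn f (Ici a) ν)
    (hs : Monotone s) (hs0 : 0 ≤ s 0)
    (hsum : Summable fun k => s (k + 1) ^ 2 * ∫ x in Ioc (t k) (t (k + 1)), f x ∂ν) :
    IntegrableOn (fun x => smoothInterpolation t s x ^ 2 * f x) (Ici a) ν := by
  have hsq_mono : Monotone fun x => smoothInterpolation t s x ^ 2 := fun x y hxy =>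
    pow_le_pow_left₀ (hs0.trans (le_smoothInterpolation hs x))
      (monotone_smoothInterpolation ht.monotone htop hs hxy) 2
  refine integrableOn_Ici_mul_of_monotone ht.monotone htop hat hf hint hsq_mono (sq_nonneg _) ?_
  simpa only [smoothInterpolation_apply_node ht] using hsum

end SmoothInterpolation

theorem sqrt_add_one_sub_sqrt_le_one {x : ℝ} (hx : 0 ≤ x) : √(x + 1) - √x ≤ 1 := by
  refine sub_le_iff_le_add.2 (Real.sqrt_le_iff.2 ⟨by positivity, ?_⟩)
  nlinarith [Real.sq_sqrt hx, Real.sqrt_nonneg x]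

theorem stmt4_general {ι : Type*} {ν : Measure ℝ} {f : ι → ℝ → ℝ}
    (hf : ∀ i, 0 ≤ᵐ[ν.restrict (Ici 0)] f i) (hint : ∀ i, IntegrableOn (f i) (Ici 0) ν)
    (htail : TendstoUniformly (fun t i => ∫ x in Ici t, f i x ∂ν) 0 atTop)
    {ε : ℝ} (hε : 0 < ε) :
    ∃ t : ℕ → ℝ, StrictMono t ∧ Tendsto t atTop atTop ∧ (∀ k, t k + 2 / ε ≤ t (k + 1)) ∧
      (∀ i k, (∫ x in Ici (t k), f i x ∂ν) ≤ (((k : ℝ) + 2)⁻¹) ^ 3) ∧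
      (∀ i, Summable fun k : ℕ => ((k : ℝ) + 2) * ∫ x in Ioc (t k) (t (k + 1)), f i x ∂ν) ∧
      ∃ g : ℝ → ℝ, ContDiff ℝ (⊤ : ℕ∞) g ∧ Monotone g ∧ (∀ r, 1 ≤ g r) ∧
        (∀ k : ℕ, g (t k) = √((k : ℝ) + 1)) ∧ (∀ r, deriv g r ≤ ε) ∧
        ∀ i, IntegrableOn (fun x => g x ^ 2 * f i x) (Ici 0) ν := by
  set s : ℕ → ℝ := fun k => √((k : ℝ) + 1) with hs_def
  have hs : Monotone s := fun _ _ h => by simp only [hs_def]; gcongr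
  have hs0 : s 0 = 1 := by simp [hs_def]
  have hs_sq (k : ℕ) : s (k + 1) ^ 2 = k + 2 := by
    rw [hs_def, Real.sq_sqrt (by positivity), Nat.cast_add_one, add_assoc, one_add_one_eq_two]
  obtain ⟨d, hd⟩ := exists_forall_deriv_smoothInterpolation_le hs (B := 1)
    (fun k => by simpa [hs_def] using sqrt_add_one_sub_sqrt_le_one k.cast_add_one_pos.le) hε
  have hgap_pos : 0 < max (2 / ε) d := lt_max_of_lt_left (by positivity)
  obtain ⟨t, hgap, ht⟩ := exists_seq_forall_le_of_tendstoUniformly htail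
    (b := fun k => ((k : ℝ) + 2)⁻¹ ^ 3) (fun k => by positivity) 0 hgap_pos.le
  have ht_strict : StrictMono t := strictMono_nat_of_lt_succ fun k => by linarith [hgap k]
  have ht_top : Tendsto t atTop atTop := tendsto_atTop_of_add_le hgap_pos hgap
  have ht0 : Ici (t 0) ⊆ Ici 0 := Ici_subset_Ici.2 (ht 0).1
  have hsum (i : ι) : Summable fun k : ℕ =>
      ((k : ℝ) + 2) * ∫ x in Ioc (t k) (t (k + 1)), f i x ∂ν :=
    summable_mul_setIntegral_Ioc ht_strict.monotone
      (ae_restrict_of_ae_restrict_of_subset ht0 (hf i)) ((hint i).mono_set ht0)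
      (fun k => by positivity) (fun k => (ht k).2 i) summable_add_two_mul_inv_add_two_pow_three
  exact ⟨t, ht_strict, ht_top, fun k => by linarith [hgap k, le_max_left (2 / ε) d],
    fun i k => (ht k).2 i, hsum, smoothInterpolation t s,
    contDiff_smoothInterpolation ht_strict.monotone ht_top,
    monotone_smoothInterpolation ht_strict.monotone ht_top hs,
    fun r => hs0.ge.trans (le_smoothInterpolation hs r), smoothInterpolation_apply_node ht_strict,
    hd t ht_strict ht_top fun k => by linarith [hgap k, le_max_right (2 / ε) d],
    fun i => integrableOn_Ici_sq_smoothInterpolation_mul ht_strict ht_top (ht 0).1 (hf i) (hint i)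
      hs (hs0 ▸ zero_le_one) (by simpa only [hs_sq] using hsum i)⟩

/-- Measure-theoretic core of Lemma 9.4 (lemGFunction): given nonnegative
`f_μ` with `∫_t^∞ f_μ → 0` as `μ → ∞` (for each `t`) and as `t → ∞` (for each
`μ`), and `ε > 0`, there is a sequence `t_k ↑ ∞` with `t_{k+1} ≥ t_k + 2/ε`
and `∫_{t_k}^∞ f_μ ≤ (k+1)⁻³` for all `μ, k`; consequently
`∑_k (k+1) ∫_{t_k}^{t_{k+1}} f_μ < ∞`, and there is a smooth monotone
`g : ℝ → [1,∞)` with `g(t_k) = √k` and `g' ≤ ε` such that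
`∫_0^∞ g² f_μ < ∞` for all `μ`.  (Here `t k` denotes `t_{k+1}`, so the bound
reads `((k+2))⁻¹ ^ 3` and `g (t k) = √(k+1)`.) -/
theorem stmt4 (f : ℕ → ℝ → ℝ)
    (hmeas : ∀ μ, Measurable (f μ))
    (hnonneg : ∀ μ x, 0 ≤ f μ x)
    (hint : ∀ μ (t : ℝ), IntegrableOn (f μ) (Set.Ici t))
    (h1 : ∀ t : ℝ, 0 ≤ t → Filter.Tendsto (fun μ => ∫ x in Set.Ici t, f μ x)
      Filter.atTop (nhds 0))
    (h2 : ∀ μ, Filter.Tendsto (fun t : ℝ => ∫ x in Set.Ici t, f μ x)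
      Filter.atTop (nhds 0))
    (ε : ℝ) (hε : 0 < ε) :
    ∃ t : ℕ → ℝ, StrictMono t ∧
      Filter.Tendsto t Filter.atTop Filter.atTop ∧
      (∀ k, t k + 2 / ε ≤ t (k + 1)) ∧
      (∀ μ k, (∫ x in Set.Ici (t k), f μ x) ≤ (((k : ℝ) + 2)⁻¹) ^ 3) ∧
      (∀ μ, Summable (fun k : ℕ =>
        ((k : ℝ) + 2) * ∫ x in Set.Ioc (t k) (t (k + 1)), f μ x)) ∧
      ∃ g : ℝ → ℝ, ContDiff ℝ (⊤ : ℕ∞) g ∧ Monotone g ∧ (∀ r, 1 ≤ g r) ∧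
        (∀ k : ℕ, g (t k) = Real.sqrt ((k : ℝ) + 1)) ∧
        (∀ r, deriv g r ≤ ε) ∧
        ∀ μ, IntegrableOn (fun x => (g x) ^ 2 * f μ x) (Set.Ici 0) :=
  stmt4_general (fun μ => .of_forall (hnonneg μ)) (fun μ => hint μ 0)
    (tendstoUniformly_zero_of_antitoneOn_of_cofinite
      (fun μ => antitoneOn_setIntegral_Ici (.of_forall (hnonneg μ)) (hint μ 0)) h2
      (Nat.cofinite_eq_atTop ▸ h1 0 le_rfl)) hε
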